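/- An increasing function f : [0,1] → [0,∞) is an admissible p-to-p* calibrator if and only if f is left-continuous, f(0) = 0, ∫₀^v f(u) du ≥ v²/2 for all v ∈ (0,1), and ∫₀^1 f(u) du = 1/2. -/

import Mathlib

open MeasureTheory ProbabilityTheory

/-- `P` is a p-variable: `ℙ(P ≤ α) ≤ α` for all `α ∈ (0,1)`. -/
def IsPVar {Ω : Type*} [MeasurableSpace Ω] (μ : Measure Ω) (P : Ω → ℝ) : Prop :=
  ∀ α ∈ Set.Ioo (0:ℝ) 1, μ {ω | P ω ≤ α} ≤ ENNReal.ofReal α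

/-- `P` is a p*-variable: `E[f(U)] ≤ E[f(P)]` for every increasing concave `f : ℝ → ℝ` for
which both expectations exist, where `U` is uniform on `[0,1]`. -/
def IsPStarVar {Ω : Type*} [MeasurableSpace Ω] (μ : Measure Ω) (P : Ω → ℝ) : Prop :=
  ∀ f : ℝ → ℝ, Monotone f → ConcaveOn ℝ Set.univ f →
    IntervalIntegrable f volume 0 1 → Integrable (fun ω => f (P ω)) μ →
    ∫ u in (0:ℝ)..1, f u ≤ ∫ ω, f (P ω) ∂μ

/-- `f` is a p-to-p* calibrator: an increasing nonnegative function on `[0,1]` such that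
`f (min P 1)` is a p*-variable for every p-variable `P` on any probability space. -/
def IsPtoPStarCalibrator (f : ℝ → ℝ) : Prop :=
  MonotoneOn f (Set.Icc 0 1) ∧ (∀ x ∈ Set.Icc (0:ℝ) 1, 0 ≤ f x) ∧
  ∀ (Ω : Type) (_ : MeasurableSpace Ω) (μ : Measure Ω), IsProbabilityMeasure μ →
    ∀ P : Ω → ℝ, Measurable P → IsPVar μ P →
      IsPStarVar μ (fun ω => f (min (P ω) 1))

open Set

/-- A monotone concave function on the line has a nonnegative antitone choice of supergradient. -/
lemma ConcaveOn.exists_antitone_supergradient {h : ℝ → ℝ} (hm : Monotone h)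
    (hc : ConcaveOn ℝ univ h) :
    ∃ s : ℝ → ℝ, Antitone s ∧ (∀ x, 0 ≤ s x) ∧ ∀ x y, h y ≤ h x + s x * (y - x) := by
  have hn : ConvexOn ℝ univ (-h) := hc.neg
  have hint : ∀ x : ℝ, x ∈ interior (univ : Set ℝ) := by simp
  have hr : ∀ x y, x < y → derivWithin (-h) (Ioi x) x ≤ slope (-h) x y := fun x y hxy =>
    hn.rightDeriv_le_slope_of_mem_interior (hint x) (mem_univ y) hxy
  have hl : ∀ x y, y < x → slope (-h) y x ≤ derivWithin (-h) (Ioi x) x := fun x y hxy =>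
    (hn.slope_le_leftDeriv_of_mem_interior (mem_univ y) (hint x) hxy).trans
      (hn.leftDeriv_le_rightDeriv_of_mem_interior (hint x))
  refine ⟨fun x => -derivWithin (-h) (Ioi x) x, ?_, ?_, ?_⟩
  · intro x y hxy
    exact neg_le_neg (hn.monotoneOn_rightDeriv (hint x) (hint y) hxy)
  · intro x
    have h1 := hr x (x + 1) (by linarith)
    have h2 := hm (show x ≤ x + 1 by linarith)
    simp only [slope_def_field, Pi.neg_apply, add_sub_cancel_left, div_one] at h1
    linarith
  · intro x y
    rcases lt_trichotomy x y with hxy | rfl | hxy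
    · have h1 := hr x y hxy
      rw [slope_def_field, le_div_iff₀ (sub_pos.2 hxy)] at h1
      simp only [Pi.neg_apply] at h1
      linarith
    · simp
    · have h1 := hl x y hxy
      rw [slope_def_field, div_le_iff₀ (sub_pos.2 hxy)] at h1
      simp only [Pi.neg_apply] at h1
      linarith

/-- Comparison of integrals through the measures of superlevel sets. -/
lemma lintegral_ofReal_le_of_meas_lt_le {α β : Type*} [MeasurableSpace α] [MeasurableSpace β]
    {μ : Measure α} {ν : Measure β} {φ : α → ℝ} {ψ : β → ℝ}
    (hφ : 0 ≤ᵐ[μ] φ) (hψ : 0 ≤ᵐ[ν] ψ) (hφm : AEMeasurable φ μ) (hψm : AEMeasurable ψ ν)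
    (hle : ∀ t, μ {a | t < φ a} ≤ ν {b | t < ψ b}) :
    ∫⁻ a, ENNReal.ofReal (φ a) ∂μ ≤ ∫⁻ b, ENNReal.ofReal (ψ b) ∂ν := by
  rw [lintegral_eq_lintegral_meas_lt μ hφ hφm, lintegral_eq_lintegral_meas_lt ν hψ hψm]
  exact lintegral_mono hle

/-- Up to a null set, a lower set meets `(0,1]` in an initial interval. -/
lemma IsLowerSet.exists_inter_Ioc_ae_eq {L : Set ℝ} (hL : IsLowerSet L) :
    ∃ v ∈ Icc (0 : ℝ) 1, (L ∩ Ioc 0 1 : Set ℝ) =ᵐ[volume] Ioc 0 v := by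
  set T : Set ℝ := insert 0 (L ∩ Ioc 0 1) with hT
  have hbdd : BddAbove T := ⟨1, by
    rintro x (rfl | hx)
    · exact zero_le_one
    · exact hx.2.2⟩
  have h0 : (0 : ℝ) ∈ T := mem_insert _ _
  have hv1 : sSup T ≤ 1 := csSup_le ⟨0, h0⟩ (by
    rintro x (rfl | hx)
    · exact zero_le_one
    · exact hx.2.2)
  refine ⟨sSup T, ⟨le_csSup hbdd h0, hv1⟩, ?_⟩
  have hne : ∀ᵐ u : ℝ, u ≠ sSup T := by simp [ae_iff]
  filter_upwards [hne] with u hu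
  refine propext ⟨fun h => ⟨h.2.1, le_csSup hbdd (Or.inr h)⟩, fun h => ?_⟩
  obtain ⟨w, hw, huw⟩ := exists_lt_of_lt_csSup ⟨0, h0⟩ (lt_of_le_of_ne h.2 hu)
  rcases hw with rfl | hw
  · exact absurd h.1 huw.not_gt
  · exact ⟨hL huw.le hw.1, h.1, huw.le.trans hw.2.2⟩

/-- A pointwise order between the primitives of two nonnegative functions is inherited by their
integrals against a nonnegative antitone weight. -/
lemma integral_antitone_mul_le {φ k f : ℝ → ℝ} (hφ : Antitone φ) (hφ0 : ∀ x, 0 ≤ φ x)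
    (hk : Monotone k) (hk0 : ∀ x ∈ Ioc (0 : ℝ) 1, 0 ≤ k x)
    (hf : Monotone f) (hf0 : ∀ x ∈ Ioc (0 : ℝ) 1, 0 ≤ f x)
    (hle : ∀ v ∈ Icc (0 : ℝ) 1, ∫ u in (0 : ℝ)..v, k u ≤ ∫ u in (0 : ℝ)..v, f u) :
    ∫ u in (0 : ℝ)..1, φ u * k u ≤ ∫ u in (0 : ℝ)..1, φ u * f u := by
  have key : ∀ {g : ℝ → ℝ}, Monotone g → (∀ x ∈ Ioc (0 : ℝ) 1, 0 ≤ g x) →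
      ENNReal.ofReal (∫ u in (0 : ℝ)..1, φ u * g u) = ∫⁻ u, ENNReal.ofReal (φ u)
        ∂((volume.restrict (Ioc 0 1)).withDensity fun u => ENNReal.ofReal (g u)) ∧
      ∀ {L : Set ℝ} {v : ℝ}, MeasurableSet L → v ∈ Icc (0 : ℝ) 1 →
        (L ∩ Ioc 0 1 : Set ℝ) =ᵐ[volume] Ioc 0 v →
        ((volume.restrict (Ioc 0 1)).withDensity fun u => ENNReal.ofReal (g u)) L =
          ENNReal.ofReal (∫ u in (0 : ℝ)..v, g u) := by
    intro g hg hg0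
    have hint : Integrable (fun u => φ u * g u) (volume.restrict (Ioc 0 1)) := by
      have hgi : Integrable g (volume.restrict (Ioc 0 1)) :=
        (intervalIntegrable_iff_integrableOn_Ioc_of_le zero_le_one).1
          (hg.monotoneOn _).intervalIntegrable
      refine hgi.bdd_mul (c := φ 0) hφ.measurable.aestronglyMeasurable ?_
      refine (ae_restrict_iff' measurableSet_Ioc).2 (.of_forall fun x hx => ?_)
      rw [Real.norm_of_nonneg (hφ0 x)]
      exact hφ hx.1.le
    refine ⟨?_, ?_⟩
    · rw [intervalIntegral.integral_of_le zero_le_one, ofReal_integral_eq_lintegral_ofReal hint,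
        lintegral_withDensity_eq_lintegral_mul _ hg.measurable.ennreal_ofReal
          hφ.measurable.ennreal_ofReal]
      · refine lintegral_congr fun u => ?_
        rw [Pi.mul_apply, ENNReal.ofReal_mul (hφ0 u), mul_comm]
      · refine (ae_restrict_iff' measurableSet_Ioc).2 (.of_forall fun x hx => ?_)
        exact mul_nonneg (hφ0 x) (hg0 x hx)
    · intro L v hL hv hLv
      rw [withDensity_apply _ hL, Measure.restrict_restrict hL, Measure.restrict_congr_set hLv,
        intervalIntegral.integral_of_le hv.1, ofReal_integral_eq_lintegral_ofReal]
      · exact (intervalIntegrable_iff_integrableOn_Ioc_of_le hv.1).1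
          (hg.monotoneOn _).intervalIntegrable
      · refine (ae_restrict_iff' measurableSet_Ioc).2 (.of_forall fun x hx => ?_)
        exact hg0 x ⟨hx.1, hx.2.trans hv.2⟩
  obtain ⟨hk1, hk2⟩ := key hk hk0
  obtain ⟨hf1, hf2⟩ := key hf hf0
  have hnn : 0 ≤ ∫ u in (0 : ℝ)..1, φ u * f u :=
    intervalIntegral.integral_nonneg_of_ae_restrict zero_le_one (by
      rw [← restrict_Ioc_eq_restrict_Icc]
      refine (ae_restrict_iff' measurableSet_Ioc).2 (.of_forall fun x hx => ?_)
      exact mul_nonneg (hφ0 x) (hf0 x hx))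
  rw [← ENNReal.ofReal_le_ofReal_iff hnn, hk1, hf1]
  refine lintegral_ofReal_le_of_meas_lt_le (.of_forall hφ0) (.of_forall hφ0)
    hφ.measurable.aemeasurable hφ.measurable.aemeasurable fun t => ?_
  have hL : IsLowerSet {a | t < φ a} := fun a b hba ha => lt_of_lt_of_le ha (hφ hba)
  have hLm : MeasurableSet {a | t < φ a} := measurableSet_lt measurable_const hφ.measurable
  obtain ⟨v, hv, hLv⟩ := hL.exists_inter_Ioc_ae_eq
  rw [hk2 hLm hv hLv, hf2 hLm hv hLv]
  exact ENNReal.ofReal_le_ofReal (hle v hv)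

/-- A p-variable stochastically dominates the uniform law on `(0,1]`. -/
lemma IsPVar.measure_preimage_le {Ω : Type*} [MeasurableSpace Ω] {μ : Measure Ω}
    [IsProbabilityMeasure μ] {P : Ω → ℝ} (hP : IsPVar μ P) {S : Set ℝ} (hS : IsLowerSet S) :
    μ (P ⁻¹' S) ≤ volume.restrict (Ioc (0 : ℝ) 1) S := by
  by_contra! hlt
  obtain ⟨r, hr, hlr, hru⟩ := ENNReal.lt_iff_exists_real_btwn.1 hlt
  have hr1 : r < 1 := by
    have := hru.trans_le prob_le_one
    rwa [ENNReal.ofReal_lt_one] at this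
  have hr0 : 0 < r := by
    have := hlr.pos
    rwa [ENNReal.ofReal_pos] at this
  by_cases hrS : r ∈ S
  · refine hlr.not_ge ?_
    calc ENNReal.ofReal r = volume.restrict (Ioc (0 : ℝ) 1) (Ioc 0 r) := by
          rw [Measure.restrict_apply measurableSet_Ioc,
            inter_eq_left.2 (Ioc_subset_Ioc_right hr1.le), Real.volume_Ioc, sub_zero]
      _ ≤ _ := measure_mono fun x hx => hS hx.2 hrS
  · refine hru.not_ge ((measure_mono fun ω hω => ?_).trans (hP r ⟨hr0, hr1⟩))
    by_contra hlt'
    exact hrS (hS (not_le.1 hlt').le hω)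

lemma IsPVar.ae_pos {Ω : Type*} [MeasurableSpace Ω] {μ : Measure Ω}
    [IsProbabilityMeasure μ] {P : Ω → ℝ} (hP : IsPVar μ P) : ∀ᵐ ω ∂μ, 0 < P ω := by
  have h := hP.measure_preimage_le (isLowerSet_Iic (0 : ℝ))
  rw [Measure.restrict_apply measurableSet_Iic,
    (disjoint_left.2 fun x hx hx' => hx'.1.not_ge hx : Disjoint (Iic (0 : ℝ)) (Ioc 0 1)).inter_eq,
    measure_empty] at h
  rw [ae_iff]
  simpa [preimage] using h

instance : IsProbabilityMeasure (volume.restrict (Ioc (0 : ℝ) 1)) := ⟨by simp⟩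

/-- The expectation of a monotone function of a p-variable is at least its uniform mean. -/
lemma IsPVar.integral_monotone_le {Ω : Type*} [MeasurableSpace Ω] {μ : Measure Ω}
    [IsProbabilityMeasure μ] {P : Ω → ℝ} (hPm : Measurable P) (hP : IsPVar μ P) {ψ : ℝ → ℝ}
    (hψ : Monotone ψ) (hint : Integrable (fun ω => ψ (P ω)) μ) :
    ∫ u in (0 : ℝ)..1, ψ u ≤ ∫ ω, ψ (P ω) ∂μ := by
  set ν : Measure ℝ := volume.restrict (Ioc (0 : ℝ) 1) with hν
  have hψi : Integrable ψ ν := (intervalIntegrable_iff_integrableOn_Ioc_of_le zero_le_one).1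
    (hψ.monotoneOn _).intervalIntegrable
  have hn1 : 0 ≤ᵐ[ν] fun u => ψ u - ψ 0 := by
    refine (ae_restrict_iff' measurableSet_Ioc).2 (.of_forall fun x hx => ?_)
    exact sub_nonneg.2 (hψ hx.1.le)
  have hn2 : 0 ≤ᵐ[μ] fun ω => ψ (P ω) - ψ 0 := by
    filter_upwards [hP.ae_pos] with ω hω using sub_nonneg.2 (hψ hω.le)
  have hm : Measurable fun u => ψ u - ψ 0 := hψ.measurable.sub_const _
  have hi1 : Integrable (fun u => ψ u - ψ 0) ν := hψi.sub (integrable_const _)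
  have hi2 : Integrable (fun ω => ψ (P ω) - ψ 0) μ := hint.sub (integrable_const _)
  have key : ∫ u, (ψ u - ψ 0) ∂ν ≤ ∫ ω, (ψ (P ω) - ψ 0) ∂μ := by
    rw [← ENNReal.ofReal_le_ofReal_iff (integral_nonneg_of_ae hn2),
      ofReal_integral_eq_lintegral_ofReal hi1 hn1,
      ofReal_integral_eq_lintegral_ofReal hi2 hn2]
    refine lintegral_ofReal_le_of_meas_lt_le hn1 hn2 hm.aemeasurable
      (hm.comp hPm).aemeasurable fun t => ?_
    have hSm : MeasurableSet {u | ψ u - ψ 0 ≤ t} := measurableSet_le hm measurable_const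
    have hS : IsLowerSet {u | ψ u - ψ 0 ≤ t} := fun a b hba ha =>
      (sub_le_sub_right (hψ hba) _).trans ha
    have h1 : {u | t < ψ u - ψ 0} = {u | ψ u - ψ 0 ≤ t}ᶜ := by
      ext; simp only [mem_compl_iff, mem_ofPred_eq, not_le]
    have h2 : {ω | t < ψ (P ω) - ψ 0} = (P ⁻¹' {u | ψ u - ψ 0 ≤ t})ᶜ := by
      ext; simp only [mem_compl_iff, mem_preimage, mem_ofPred_eq, not_le]
    rw [h1, h2, prob_compl_eq_one_sub hSm, prob_compl_eq_one_sub (hPm hSm)]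
    exact tsub_le_tsub_left (hP.measure_preimage_le hS) _
  rw [integral_sub hψi (integrable_const _), integral_sub hint (integrable_const _)] at key
  simp only [integral_const, probReal_univ, one_smul] at key
  rw [intervalIntegral.integral_of_le zero_le_one]
  linarith

/-- The extension of the restriction of `f` to `[0,1]` that is constant on both sides. -/
def clampExtend (f : ℝ → ℝ) (x : ℝ) : ℝ := f (max 0 (min x 1))

lemma clampExtend_of_mem (f : ℝ → ℝ) {x : ℝ} (hx : x ∈ Icc (0 : ℝ) 1) : clampExtend f x = f x := by
  rw [clampExtend, min_eq_left hx.2, max_eq_right hx.1]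

lemma clampExtend_of_pos (f : ℝ → ℝ) {x : ℝ} (hx : 0 < x) : clampExtend f x = f (min x 1) := by
  rw [clampExtend, max_eq_right (le_min hx.le zero_le_one)]

lemma clamp_mem_Icc (x : ℝ) : max 0 (min x 1) ∈ Icc (0 : ℝ) 1 :=
  ⟨le_max_left _ _, max_le zero_le_one (min_le_right _ _)⟩

lemma MonotoneOn.clampExtend {f : ℝ → ℝ} (hf : MonotoneOn f (Icc 0 1)) :
    Monotone (clampExtend f) := fun x y hxy =>
  hf (clamp_mem_Icc x) (clamp_mem_Icc y) (max_le_max le_rfl (min_le_min hxy le_rfl))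

lemma MonotoneOn.intervalIntegrable_of_mem {f : ℝ → ℝ} (hf : MonotoneOn f (Icc 0 1)) {a b : ℝ}
    (ha : a ∈ Icc (0 : ℝ) 1) (hb : b ∈ Icc (0 : ℝ) 1) : IntervalIntegrable f volume a b :=
  (hf.mono (uIcc_subset_Icc ha hb)).intervalIntegrable

lemma integral_clampExtend (f : ℝ → ℝ) {v : ℝ} (hv : v ∈ Icc (0 : ℝ) 1) :
    ∫ u in (0 : ℝ)..v, clampExtend f u = ∫ u in (0 : ℝ)..v, f u :=
  intervalIntegral.integral_congr fun u hu => by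
    rw [uIcc_of_le hv.1] at hu
    exact clampExtend_of_mem f ⟨hu.1, hu.2.trans hv.2⟩

lemma isPVar_id_uniform : IsPVar (volume.restrict (Ioc (0 : ℝ) 1)) id := fun α hα => by
  have : {ω : ℝ | id ω ≤ α} = Iic α := rfl
  rw [this, Measure.restrict_apply measurableSet_Iic, inter_comm, Ioc_inter_Iic,
    min_eq_right hα.2.le, Real.volume_Ioc, sub_zero]

lemma integral_min_id {v : ℝ} (hv : v ∈ Icc (0 : ℝ) 1) :
    ∫ u in (0 : ℝ)..1, min u v = v ^ 2 / 2 + v * (1 - v) := by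
  have hc : Continuous fun u : ℝ => min u v := continuous_id.min continuous_const
  rw [← intervalIntegral.integral_add_adjacent_intervals (hc.intervalIntegrable 0 v)
    (hc.intervalIntegrable v 1)]
  have h1 : ∫ u in (0 : ℝ)..v, min u v = ∫ u in (0 : ℝ)..v, u :=
    intervalIntegral.integral_congr fun u hu => by
      rw [uIcc_of_le hv.1] at hu
      exact min_eq_left hu.2
  have h2 : ∫ u in v..1, min u v = ∫ _ in v..1, v :=
    intervalIntegral.integral_congr fun u hu => by
      rw [uIcc_of_le hv.2] at hu
      exact min_eq_right hu.1
  rw [h1, h2, integral_id, intervalIntegral.integral_const, smul_eq_mul]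
  ring

lemma IsPtoPStarCalibrator.sq_div_two_le {f : ℝ → ℝ} (hf : IsPtoPStarCalibrator f) {v : ℝ}
    (hv : v ∈ Icc (0 : ℝ) 1) : v ^ 2 / 2 ≤ ∫ u in (0 : ℝ)..v, f u := by
  obtain ⟨hmono, -, hcal⟩ := hf
  have hmin : MonotoneOn (fun u => min (f u) v) (Icc 0 1) := fun x hx y hy hxy =>
    min_le_min (hmono hx hy hxy) le_rfl
  have h0 : (0 : ℝ) ∈ Icc (0 : ℝ) 1 := left_mem_Icc.2 zero_le_one
  have h1 : (1 : ℝ) ∈ Icc (0 : ℝ) 1 := right_mem_Icc.2 zero_le_one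
  have hcongr : (fun u => min (f u) v) =ᵐ[volume.restrict (Ioc (0 : ℝ) 1)]
      fun u => min (f (min (id u) 1)) v := by
    refine (ae_restrict_iff' measurableSet_Ioc).2 (.of_forall fun x hx => ?_)
    simp only [id, min_eq_left hx.2]
  have key := hcal ℝ inferInstance (volume.restrict (Ioc (0 : ℝ) 1)) inferInstance id measurable_id
    isPVar_id_uniform (fun x => min x v) (fun x y hxy => min_le_min hxy le_rfl)
    ((concaveOn_id convex_univ).inf (concaveOn_const v convex_univ))
    ((continuous_id.min continuous_const).intervalIntegrable _ _)
    (((intervalIntegrable_iff_integrableOn_Ioc_of_le zero_le_one).1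
      (hmin.intervalIntegrable_of_mem h0 h1)).congr hcongr)
  rw [integral_min_id hv, ← integral_congr_ae hcongr,
    ← intervalIntegral.integral_of_le zero_le_one,
    ← intervalIntegral.integral_add_adjacent_intervals (hmin.intervalIntegrable_of_mem h0 hv)
      (hmin.intervalIntegrable_of_mem hv h1)] at key
  have hl : ∫ u in (0 : ℝ)..v, min (f u) v ≤ ∫ u in (0 : ℝ)..v, f u :=
    intervalIntegral.integral_mono_on hv.1 (hmin.intervalIntegrable_of_mem h0 hv)
      (hmono.intervalIntegrable_of_mem h0 hv) fun u _ => min_le_left _ _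
  have hr : ∫ u in v..1, min (f u) v ≤ ∫ _ in v..1, v :=
    intervalIntegral.integral_mono_on hv.2 (hmin.intervalIntegrable_of_mem hv h1)
      intervalIntegrable_const fun u _ => min_le_right _ _
  rw [intervalIntegral.integral_const, smul_eq_mul] at hr
  linarith

lemma isPtoPStarCalibrator_of_sq_div_two_le {f : ℝ → ℝ} (hmono : MonotoneOn f (Icc 0 1))
    (hpos : ∀ x ∈ Icc (0 : ℝ) 1, 0 ≤ f x)
    (hF : ∀ v ∈ Icc (0 : ℝ) 1, v ^ 2 / 2 ≤ ∫ u in (0 : ℝ)..v, f u) :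
    IsPtoPStarCalibrator f := by
  refine ⟨hmono, hpos, fun Ω _ μ _ P hPm hP h hm hc _ hint => ?_⟩
  obtain ⟨s, hs, hs0, hsup⟩ := hc.exists_antitone_supergradient hm
  have he := hmono.clampExtend
  have hae : (fun ω => h (f (min (P ω) 1))) =ᵐ[μ] fun ω => h (clampExtend f (P ω)) := by
    filter_upwards [hP.ae_pos] with ω hω
    rw [clampExtend_of_pos f hω]
  have hφ : Antitone fun u => s (clampExtend f u) := fun x y hxy => hs (he hxy)
  have hhe : Monotone fun u => h (clampExtend f u) := hm.comp he
  rw [integral_congr_ae hae]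
  refine le_trans ?_ (hP.integral_monotone_le hPm hhe (hint.congr hae))
  have hw : ∫ u in (0 : ℝ)..1, s (clampExtend f u) * u ≤
      ∫ u in (0 : ℝ)..1, s (clampExtend f u) * clampExtend f u :=
    integral_antitone_mul_le hφ (fun x => hs0 _) monotone_id (fun x hx => hx.1.le) he
      (fun x _ => hpos _ (clamp_mem_Icc x)) fun v hv => by
        rw [integral_clampExtend f hv]
        simpa [integral_id] using hF v hv
  have hi1 : IntervalIntegrable (fun u => s (clampExtend f u) * u) volume 0 1 :=
    hφ.intervalIntegrable.mul_continuousOn continuousOn_id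
  have hi2 : IntervalIntegrable (fun u => s (clampExtend f u) * clampExtend f u) volume 0 1 := by
    rw [intervalIntegrable_iff_integrableOn_Ioc_of_le zero_le_one]
    have hei : IntegrableOn (clampExtend f) (Ioc 0 1) :=
      (intervalIntegrable_iff_integrableOn_Ioc_of_le zero_le_one).1 he.intervalIntegrable
    refine hei.bdd_mul (c := s (clampExtend f 0)) hφ.measurable.aestronglyMeasurable ?_
    refine (ae_restrict_iff' measurableSet_Ioc).2 (.of_forall fun x hx => ?_)
    rw [Real.norm_of_nonneg (hs0 _)]
    exact hφ hx.1.le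
  calc ∫ u in (0 : ℝ)..1, h u
      ≤ ∫ u in (0 : ℝ)..1, (h (clampExtend f u) +
          (s (clampExtend f u) * u - s (clampExtend f u) * clampExtend f u)) :=
        intervalIntegral.integral_mono_on zero_le_one hm.intervalIntegrable
          (hhe.intervalIntegrable.add (hi1.sub hi2)) fun u _ => by
            have := hsup (clampExtend f u) u
            linarith
    _ = (∫ u in (0 : ℝ)..1, h (clampExtend f u)) + ((∫ u in (0 : ℝ)..1, s (clampExtend f u) * u) -
          ∫ u in (0 : ℝ)..1, s (clampExtend f u) * clampExtend f u) := by
        rw [intervalIntegral.integral_add hhe.intervalIntegrable (hi1.sub hi2),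
          intervalIntegral.integral_sub hi1 hi2]
    _ ≤ _ := by linarith

/-- The left-continuous version of `f` on `(0,1]`, set to `0` on `(-∞,0]`. -/
noncomputable def leftVersion (f : ℝ → ℝ) (x : ℝ) : ℝ :=
  if x ≤ 0 then 0 else Function.leftLim (clampExtend f) x

lemma leftVersion_le {f : ℝ → ℝ} (hmono : MonotoneOn f (Icc 0 1))
    (hpos : ∀ x ∈ Icc (0 : ℝ) 1, 0 ≤ f x) {x : ℝ} (hx : x ∈ Icc (0 : ℝ) 1) :
    leftVersion f x ≤ f x := by
  unfold leftVersion
  split_ifs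
  · exact hpos x hx
  · exact (hmono.clampExtend.leftLim_le le_rfl).trans (clampExtend_of_mem f hx).le

lemma isPtoPStarCalibrator_leftVersion {f : ℝ → ℝ} (hf : IsPtoPStarCalibrator f) :
    IsPtoPStarCalibrator (leftVersion f) := by
  have hmono := hf.1
  have hpos := hf.2.1
  have he := hmono.clampExtend
  have hnn : ∀ x, 0 < x → 0 ≤ Function.leftLim (clampExtend f) x := fun x hx =>
    (hpos _ (clamp_mem_Icc 0)).trans (he.le_leftLim hx)
  refine isPtoPStarCalibrator_of_sq_div_two_le ?_ ?_ fun v hv => ?_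
  · intro x _ y _ hxy
    unfold leftVersion
    split_ifs with h1 h2 h2
    · exact le_rfl
    · exact hnn y (not_le.1 h2)
    · exact absurd (hxy.trans h2) h1
    · exact he.leftLim hxy
  · intro x _
    unfold leftVersion
    split_ifs with h1
    · exact le_rfl
    · exact hnn x (not_le.1 h1)
  · have hae : ∀ᵐ u : ℝ, u ∈ uIoc 0 v → f u = leftVersion f u := by
      filter_upwards [he.countable_not_continuousAt.ae_notMem volume] with u hu huv
      rw [uIoc_of_le hv.1] at huv
      have hc : ContinuousAt (clampExtend f) u := not_not.1 hu
      rw [leftVersion, if_neg huv.1.not_ge, hc.continuousWithinAt.leftLim_eq,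
        clampExtend_of_mem f ⟨huv.1.le, huv.2.trans hv.2⟩]
    rw [← intervalIntegral.integral_congr_ae hae]
    exact hf.sq_div_two_le hv

/-- Truncating at a level that keeps the total integral at least `1/2` preserves calibrators:
past the truncation point the primitive is affine, hence above the convex function `v²/2` as soon
as it is so at both ends. -/
lemma isPtoPStarCalibrator_min_const {f : ℝ → ℝ} (hf : IsPtoPStarCalibrator f) {c : ℝ} (hc : 0 ≤ c)
    (h : 1 / 2 ≤ ∫ u in (0 : ℝ)..1, min (f u) c) :
    IsPtoPStarCalibrator fun u => min (f u) c := by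
  have hmono := hf.1
  have hmin : MonotoneOn (fun u => min (f u) c) (Icc 0 1) := fun x hx y hy hxy =>
    min_le_min (hmono hx hy hxy) le_rfl
  have h0 : (0 : ℝ) ∈ Icc (0 : ℝ) 1 := left_mem_Icc.2 zero_le_one
  have h1 : (1 : ℝ) ∈ Icc (0 : ℝ) 1 := right_mem_Icc.2 zero_le_one
  have hL : IsLowerSet {u | clampExtend f u ≤ c} := fun a b hba ha =>
    (hmono.clampExtend hba).trans ha
  obtain ⟨a, ha, hLa⟩ := hL.exists_inter_Ioc_ae_eq
  have hmem : ∀ᵐ u : ℝ, u ∈ Ioc (0 : ℝ) 1 → (f u ≤ c ↔ u ≤ a) := by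
    filter_upwards [hLa] with u hu hu1
    have hu' : (u ∈ {u | clampExtend f u ≤ c} ∩ Ioc 0 1) = (u ∈ Ioc 0 a) := hu
    have := hu'.to_iff
    simpa [hu1.1, hu1.2, clampExtend_of_mem f (Ioc_subset_Icc_self hu1)] using this
  have hlow : ∀ v ∈ Icc (0 : ℝ) 1, v ≤ a → v ^ 2 / 2 ≤ ∫ u in (0 : ℝ)..v, min (f u) c := by
    intro v hv hva
    refine (hf.sq_div_two_le hv).trans_eq (intervalIntegral.integral_congr_ae ?_)
    filter_upwards [hmem] with u hu huv
    rw [uIoc_of_le hv.1] at huv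
    exact (min_eq_left ((hu ⟨huv.1, huv.2.trans hv.2⟩).2 (huv.2.trans hva))).symm
  have hhigh : ∀ v ∈ Icc a 1, ∫ u in (0 : ℝ)..v, min (f u) c =
      (∫ u in (0 : ℝ)..a, min (f u) c) + (v - a) * c := by
    intro v hv
    have hv' : v ∈ Icc (0 : ℝ) 1 := ⟨ha.1.trans hv.1, hv.2⟩
    rw [← intervalIntegral.integral_add_adjacent_intervals (hmin.intervalIntegrable_of_mem h0 ha)
      (hmin.intervalIntegrable_of_mem ha hv'), ← smul_eq_mul, ← intervalIntegral.integral_const]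
    congr 1
    refine intervalIntegral.integral_congr_ae ?_
    filter_upwards [hmem] with u hu huv
    rw [uIoc_of_le hv.1] at huv
    have := (hu ⟨ha.1.trans_lt huv.1, huv.2.trans hv.2⟩).not.2 huv.1.not_ge
    exact min_eq_right (not_le.1 this).le
  refine isPtoPStarCalibrator_of_sq_div_two_le hmin (fun x hx => le_min (hf.2.1 x hx) hc) ?_
  intro v hv
  rcases le_total v a with hva | hav
  · exact hlow v hv hva
  · rw [hhigh v ⟨hav, hv.2⟩]
    rw [hhigh 1 ⟨ha.2, le_rfl⟩] at h
    have hA := hlow a ha le_rfl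
    rcases ha.2.eq_or_lt with rfl | ha1
    · have : v = 1 := le_antisymm hv.2 hav
      subst this
      linarith
    · set A := ∫ u in (0 : ℝ)..a, min (f u) c
      have : 0 ≤ (1 - a) * (A + (v - a) * c - v ^ 2 / 2) := by
        nlinarith [mul_le_mul_of_nonneg_left h (sub_nonneg.2 hav),
          mul_le_mul_of_nonneg_left hA (sub_nonneg.2 hv.2),
          mul_nonneg (mul_nonneg (sub_nonneg.2 hav) (sub_nonneg.2 hv.2)) (sub_nonneg.2 ha.2)]
      have := nonneg_of_mul_nonneg_right this (sub_pos.2 ha1)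
      linarith

/-- A monotone function below `f` with the same total integral agrees with `f` at the points where
`f` is left-continuous. -/
lemma le_of_integral_le_of_continuousWithinAt {f g : ℝ → ℝ} (hf : MonotoneOn f (Icc 0 1))
    (hg : MonotoneOn g (Icc 0 1)) (hgf : ∀ x ∈ Icc (0 : ℝ) 1, g x ≤ f x)
    (hint : ∫ u in (0 : ℝ)..1, f u ≤ ∫ u in (0 : ℝ)..1, g u) {x : ℝ} (hx : x ∈ Ioc (0 : ℝ) 1)
    (hc : ContinuousWithinAt f (Iic x) x) : f x ≤ g x := by
  by_contra! hlt
  have h0 : (0 : ℝ) ∈ Icc (0 : ℝ) 1 := left_mem_Icc.2 zero_le_one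
  have h1 : (1 : ℝ) ∈ Icc (0 : ℝ) 1 := right_mem_Icc.2 zero_le_one
  have hev : ∀ᶠ u in nhdsWithin x (Iic x), g x < f u := hc.eventually (lt_mem_nhds hlt)
  obtain ⟨l, hl, hlu⟩ := (mem_nhdsLE_iff_exists_Ioc_subset' hx.1).1 hev
  set m := max l 0 with hm
  have hmx : m < x := max_lt hl hx.1
  have hfi := hf.intervalIntegrable_of_mem h0 h1
  have hgi := hg.intervalIntegrable_of_mem h0 h1
  have hae : (fun u => f u - g u) =ᵐ[volume.restrict (Ioc (0 : ℝ) 1)] 0 := by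
    have hnn : 0 ≤ᵐ[volume.restrict (Ioc (0 : ℝ) 1)] fun u => f u - g u :=
      (ae_restrict_iff' measurableSet_Ioc).2 (.of_forall fun u hu =>
        sub_nonneg.2 (hgf u (Ioc_subset_Icc_self hu)))
    refine (intervalIntegral.integral_eq_zero_iff_of_le_of_nonneg_ae zero_le_one hnn
      (hfi.sub hgi)).1 ?_
    have h2 : 0 ≤ ∫ u in (0 : ℝ)..1, (f u - g u) :=
      intervalIntegral.integral_nonneg zero_le_one fun u hu => sub_nonneg.2 (hgf u hu)
    rw [intervalIntegral.integral_sub hfi hgi] at h2 ⊢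
    linarith
  have hae' := (ae_restrict_iff' measurableSet_Ioc).1 hae
  have hzero : volume (Ioc m x) = 0 := by
    refine measure_mono_null (fun u hu => ?_) (ae_iff.1 hae')
    have hu0 : 0 < u := (le_max_right l 0).trans_lt hu.1
    have hu1 : u ≤ 1 := hu.2.trans hx.2
    have h3 : g x < f u := hlu ⟨(le_max_left l 0).trans_lt hu.1, hu.2⟩
    have h4 : g u ≤ g x := hg ⟨hu0.le, hu1⟩ (Ioc_subset_Icc_self hx) hu.2
    exact fun hcon => (sub_pos.2 (h4.trans_lt h3)).ne' (hcon ⟨hu0, hu1⟩)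
  rw [Real.volume_Ioc, ENNReal.ofReal_eq_zero] at hzero
  linarith

/-- **Theorem.** An increasing function `f : [0,1] → [0,∞)` is an admissible p-to-p*
calibrator if and only if `f` is left-continuous, `f 0 = 0`, `∫₀^v f ≥ v²/2` for all
`v ∈ (0,1)`, and `∫₀^1 f = 1/2`. -/
theorem admissible_p_to_pStar_calibrator_iff
    (f : ℝ → ℝ) (hmono : MonotoneOn f (Set.Icc 0 1))
    (hpos : ∀ x ∈ Set.Icc (0:ℝ) 1, 0 ≤ f x) :
    (IsPtoPStarCalibrator f ∧
      ¬∃ g : ℝ → ℝ, IsPtoPStarCalibrator g ∧ (∀ x ∈ Set.Icc (0:ℝ) 1, g x ≤ f x) ∧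
        ∃ x ∈ Set.Icc (0:ℝ) 1, g x ≠ f x) ↔
    ((∀ x ∈ Set.Ioc (0:ℝ) 1, ContinuousWithinAt f (Set.Iic x) x) ∧ f 0 = 0 ∧
      (∀ v ∈ Set.Ioo (0:ℝ) 1, v ^ 2 / 2 ≤ ∫ u in (0:ℝ)..v, f u) ∧
      ∫ u in (0:ℝ)..1, f u = 1/2) := by
  constructor
  · rintro ⟨hcal, hadm⟩
    push Not at hadm
    have hleft : ∀ x ∈ Icc (0 : ℝ) 1, leftVersion f x = f x :=
      hadm _ (isPtoPStarCalibrator_leftVersion hcal) fun x hx => leftVersion_le hmono hpos hx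
    have h1 : (1 : ℝ) ∈ Icc (0 : ℝ) 1 := right_mem_Icc.2 zero_le_one
    refine ⟨fun x hx => ?_, ?_, fun v hv => hcal.sq_div_two_le (Ioo_subset_Icc_self hv), ?_⟩
    · have hx' := Ioc_subset_Icc_self hx
      have heq := hleft x hx'
      rw [leftVersion, if_neg hx.1.not_ge, ← clampExtend_of_mem f hx',
        ← hmono.clampExtend.continuousWithinAt_Iio_iff_leftLim_eq,
        continuousWithinAt_Iio_iff_Iic] at heq
      refine heq.congr_of_eventuallyEq ?_ (clampExtend_of_mem f hx').symm
      filter_upwards [Ioc_mem_nhdsLE hx.1] with u hu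
      exact (clampExtend_of_mem f ⟨hu.1.le, hu.2.trans hx.2⟩).symm
    · rw [← hleft 0 (left_mem_Icc.2 zero_le_one), leftVersion, if_pos le_rfl]
    · by_contra hne
      have hge := hcal.sq_div_two_le h1
      have hgt : 1 / 2 < ∫ u in (0 : ℝ)..1, f u :=
        lt_of_le_of_ne (by simpa using hge) (Ne.symm hne)
      set I := ∫ u in (0 : ℝ)..1, f u with hI
      have hfi := hmono.intervalIntegrable_of_mem (left_mem_Icc.2 zero_le_one) h1
      have hIle : I ≤ f 1 := by
        have := intervalIntegral.integral_mono_on zero_le_one hfi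
          (intervalIntegrable_const (c := f 1)) fun u hu => hmono hu h1 hu.2
        simpa using this
      set c := f 1 - (I - 1 / 2) with hc
      have hmin : MonotoneOn (fun u => min (f u) c) (Icc 0 1) := fun x hx y hy hxy =>
        min_le_min (hmono hx hy hxy) le_rfl
      have htotal : 1 / 2 ≤ ∫ u in (0 : ℝ)..1, min (f u) c := by
        have := intervalIntegral.integral_mono_on zero_le_one
          (hfi.sub (intervalIntegrable_const (c := I - 1 / 2)))
          (hmin.intervalIntegrable_of_mem (left_mem_Icc.2 zero_le_one) h1) fun u hu =>
            le_min (by linarith) (by linarith [hmono hu h1 hu.2])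
        rw [intervalIntegral.integral_sub hfi intervalIntegrable_const,
          intervalIntegral.integral_const, ← hI] at this
        simp only [sub_zero, one_smul] at this
        linarith
      have := hadm _ (isPtoPStarCalibrator_min_const hcal (by linarith) htotal)
        (fun x _ => min_le_left _ _) 1 h1
      have := min_le_right (f 1) c
      linarith
  · rintro ⟨hleft, hzero, hF, hF1⟩
    refine ⟨isPtoPStarCalibrator_of_sq_div_two_le hmono hpos fun v hv => ?_, ?_⟩
    · rcases hv.1.eq_or_lt with rfl | hv0
      · simp
      · rcases hv.2.eq_or_lt with rfl | hv1
        · rw [hF1]; norm_num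
        · exact hF v ⟨hv0, hv1⟩
    · rintro ⟨g, hg, hgf, x, hx, hne⟩
      refine hne (le_antisymm (hgf x hx) ?_)
      rcases hx.1.eq_or_lt with rfl | hx0
      · rw [hzero]
        exact hg.2.1 0 hx
      · refine le_of_integral_le_of_continuousWithinAt hmono hg.1 hgf ?_ ⟨hx0, hx.2⟩
          (hleft x ⟨hx0, hx.2⟩)
        rw [hF1]
        simpa using hg.sq_div_two_le (right_mem_Icc.2 zero_le_one)
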